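/- (Connection formula at t = 1 for the logarithmic hypergeometric solution.) Let a_n = ((1/2)_n / n!)², h_n = Σ_{k=1}^{n} 1/(k(k−1/2)), φ₀(t) = Σ_{n=0}^{∞} a_n tⁿ, and φ₁(t) = log(t)·φ₀(t) + Σ_{n=1}^{∞} a_n h_n tⁿ. Then for every real t with 0 < t < 1 one has π·φ₀(1−t) = 4·log(2)·φ₀(t) − φ₁(t). -/

import Mathlib

/-- `a_n = ((1/2)_n / n!)²`, where `(1/2)_n` is the Pochhammer symbol. -/
noncomputable def aCoef (n : ℕ) : ℝ :=
  ((ascPochhammer ℝ n).eval (1 / 2) / n.factorial) ^ 2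

/-- `h_n = ∑_{k=1}^n 1/(k(k-1/2))`. -/
noncomputable def hSum (n : ℕ) : ℝ := ∑ k ∈ Finset.Icc 1 n, 1 / ((k : ℝ) * ((k : ℝ) - 1 / 2))

/-- `φ₀(t) = ∑_{n≥0} a_n tⁿ`. -/
noncomputable def phi0 (t : ℝ) : ℝ := ∑' n : ℕ, aCoef n * t ^ n

/-- `φ₁(t) = log(t)·φ₀(t) + ∑_{n≥1} a_n h_n tⁿ` (note `h₀ = 0`). -/
noncomputable def phi1 (t : ℝ) : ℝ :=
  Real.log t * phi0 t + ∑' n : ℕ, aCoef n * hSum n * t ^ n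

/-!
Both `φ₀` and `φ₁` solve the self-adjoint hypergeometric equation `(t (1 - t) y′)′ = y / 4` on
`(0, 1)`. The equation is invariant under `t ↦ 1 - t`, so it is also solved by `φ₀ (1 - t)`; since
the Wronskian of `φ₀` and `φ₁` tends to `1` at `0`, this solution is `a φ₀ + b φ₁` for some
constants. They are read off from the logarithmic behaviour at `0`, where `φ₀ → 1` and
`φ₁ - log → 0`. The behaviour of `π φ₀ (1 - t)` comes from `π φ₀ (k²) = 2 K(k)` with `K` the
complete elliptic integral: writing `x = k cos θ`, the identity
`1 / √(1 - x²) = x / √(1 - x²) + √((1 - x) / (1 + x))` splits `K(k)` into `artanh k`, which carries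
the logarithm, and an integral that is continuous up to `k = 1`, where it equals `log 2`.
-/

open Filter Topology Set Asymptotics FormalMultilinearSeries Real
open scoped NNReal ENNReal

section PowerSeries

variable {𝕜 : Type*} [NontriviallyNormedField 𝕜] {c : ℕ → 𝕜} {x : 𝕜}

/-- The coefficients of the image of the power series `∑ c n xⁿ` under the Euler operator
`θ = x d/dx`. -/
def eulerCoeff (c : ℕ → 𝕜) (n : ℕ) : 𝕜 := n * c n

theorem radius_le_radius_eulerCoeff (c : ℕ → 𝕜) :
    (ofScalars 𝕜 c).radius ≤ (ofScalars 𝕜 (eulerCoeff c)).radius := by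
  refine ENNReal.le_of_forall_nnreal_lt fun r hr => ?_
  obtain ⟨a, ⟨ha0, ha1⟩, C, -, hC⟩ := (ofScalars 𝕜 c).norm_mul_pow_le_mul_pow_of_lt_radius hr
  have hlim : Tendsto (fun n : ℕ => n * (C * a ^ n)) atTop (𝓝 0) := by
    simpa [mul_left_comm] using (tendsto_self_mul_const_pow_of_lt_one ha0.le ha1).const_mul C
  refine le_radius_of_isBigO _ (.trans (.of_norm_le fun n => ?_) (hlim.isBigO_one ℝ))
  simp only [ofScalars_norm, eulerCoeff, norm_mul, norm_pow, norm_norm, NNReal.norm_eq,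
    mul_assoc] at hC ⊢
  exact mul_le_mul (by simpa using Nat.norm_cast_le (α := 𝕜) n) (hC n) (by positivity)
    (by positivity)

theorem enorm_lt_radius_of_norm_le {C : ℝ} (hc : ∀ n, ‖c n‖ ≤ C) (hx : ‖x‖ < 1) :
    ‖x‖ₑ < (ofScalars 𝕜 c).radius := by
  have hone : (1 : ℝ≥0∞) ≤ (ofScalars 𝕜 c).radius := by
    simpa using le_radius_of_bound (r := 1) (ofScalars 𝕜 c) C fun n => by simpa using hc n
  refine lt_of_lt_of_le ?_ hone
  simpa [enorm_eq_nnnorm, ← NNReal.coe_lt_coe] using hx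

theorem hasSum_derivSeries_sum_apply {E F : Type*} [NormedAddCommGroup E] [NormedSpace 𝕜 E]
    [NormedAddCommGroup F] [NormedSpace 𝕜 F] [CompleteSpace F]
    {p : FormalMultilinearSeries 𝕜 E F} {x : E} (hx : ‖x‖ₑ < p.radius) :
    HasSum (fun n => (n + 1) • p (n + 1) fun _ => x) (p.derivSeries.sum x x) := by
  have hsum := p.derivSeries.hasSum (x := x)
    (by simpa using hx.trans_le p.radius_le_radius_derivSeries)
  simpa [derivSeries_apply_diag] using hsum.mapL (ContinuousLinearMap.apply 𝕜 F x)

variable [CompleteSpace 𝕜]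

theorem hasSum_ofScalarsSum (hx : ‖x‖ₑ < (ofScalars 𝕜 c).radius) :
    HasSum (fun n => c n * x ^ n) (ofScalarsSum c x) := by
  have h := (ofScalars 𝕜 c).hasSum (x := x) (by simpa using hx)
  exact h.congr_fun fun n => by simp [mul_comm]

theorem differentiableAt_ofScalarsSum (hx : ‖x‖ₑ < (ofScalars 𝕜 c).radius) :
    DifferentiableAt 𝕜 (ofScalarsSum c) x :=
  (FormalMultilinearSeries.hasFDerivAt_sum hx).differentiableAt

theorem tendsto_ofScalarsSum_zero (hc : 0 < (ofScalars 𝕜 c).radius) :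
    Tendsto (ofScalarsSum c) (𝓝 0) (𝓝 (c 0)) := by
  have hdiff : DifferentiableAt 𝕜 (ofScalarsSum c) (0 : 𝕜) :=
    differentiableAt_ofScalarsSum (by simpa using hc)
  simpa using hdiff.continuousAt.tendsto

theorem hasSum_eulerCoeff_succ (hx : ‖x‖ₑ < (ofScalars 𝕜 c).radius) :
    HasSum (fun n : ℕ => ((n + 1 : ℕ) : 𝕜) * c (n + 1) * x ^ (n + 1))
      (ofScalarsSum (eulerCoeff c) x) := by
  have hsum := hasSum_ofScalarsSum (hx.trans_le (radius_le_radius_eulerCoeff c))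
  simpa [eulerCoeff] using (hasSum_nat_add_iff' 1).2 hsum

theorem hasDerivAt_ofScalarsSum (hx : ‖x‖ₑ < (ofScalars 𝕜 c).radius) (hx0 : x ≠ 0) :
    HasDerivAt (ofScalarsSum c) (ofScalarsSum (eulerCoeff c) x / x) x := by
  have hderiv : HasSum (fun n : ℕ => ((n + 1 : ℕ) : 𝕜) * c (n + 1) * x ^ (n + 1))
      ((ofScalars 𝕜 c).derivSeries.sum x x) :=
    (hasSum_derivSeries_sum_apply (p := ofScalars 𝕜 c) hx).congr_fun fun n => by
      rw [ofScalars_apply_eq, nsmul_eq_mul, smul_eq_mul, mul_assoc]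
  have hval := hderiv.unique (hasSum_eulerCoeff_succ hx)
  have hd : HasFDerivAt (ofScalarsSum c) ((ofScalars 𝕜 c).derivSeries.sum x) x :=
    FormalMultilinearSeries.hasFDerivAt_sum hx
  generalize (ofScalars 𝕜 c).derivSeries.sum x = L at hval hd
  have hL : L 1 = ofScalarsSum (eulerCoeff c) x / x := by
    rw [← hval, eq_div_iff hx0, mul_comm, ← smul_eq_mul, ← map_smul, smul_eq_mul, mul_one]
  simpa only [hL] using hd.hasDerivAt

theorem hasSum_hypergeometric (hx : ‖x‖ₑ < (ofScalars 𝕜 c).radius) (a b d : 𝕜) :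
    HasSum (fun n : ℕ => ((n + 1) * (n + d) * c (n + 1) - (n + a) * (n + b) * c n) * x ^ (n + 1))
      (ofScalarsSum (eulerCoeff (eulerCoeff c)) x + (d - 1) * ofScalarsSum (eulerCoeff c) x
        - x * (ofScalarsSum (eulerCoeff (eulerCoeff c)) x
          + (a + b) * ofScalarsSum (eulerCoeff c) x + a * b * ofScalarsSum c x)) := by
  have hx' := hx.trans_le (radius_le_radius_eulerCoeff c)
  have s0 := hasSum_ofScalarsSum hx
  have s1 := hasSum_ofScalarsSum hx'
  have s2 := hasSum_ofScalarsSum (hx'.trans_le (radius_le_radius_eulerCoeff _))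
  have hhead := (hasSum_nat_add_iff' 1).2 (s2.add (s1.mul_left (d - 1)))
  have htail := ((s2.add (s1.mul_left (a + b))).add (s0.mul_left (a * b))).mul_left x
  simp only [Finset.sum_range_one, eulerCoeff, Nat.cast_zero, zero_mul, mul_zero, add_zero,
    sub_zero] at hhead
  refine (hhead.sub htail).congr_fun fun n => ?_
  simp only [eulerCoeff]
  push_cast
  ring

end PowerSeries

section SturmLiouville

variable {𝕜 : Type*} [RCLike 𝕜] {p r : 𝕜 → 𝕜} {s : Set 𝕜} {y q u v f g : 𝕜 → 𝕜}

/-- `y` is a solution on `s` of the Sturm–Liouville equation `(p y′)′ = r y` with flux `q = p y′`.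
Carrying the flux along turns the equation into a first order system. -/
structure IsSturmLiouvilleSolution (p r : 𝕜 → 𝕜) (s : Set 𝕜) (y q : 𝕜 → 𝕜) : Prop where
  hasDerivAt : ∀ t ∈ s, HasDerivAt y (q t / p t) t
  hasDerivAt_flux : ∀ t ∈ s, HasDerivAt q (r t * y t) t

/-- The Wronskian `u (p v′) - v (p u′)` of two functions `u`, `v` with fluxes `f = p u′`,
`g = p v′`. -/
def wronskian (u f v g : 𝕜 → 𝕜) (t : 𝕜) : 𝕜 := u t * g t - v t * f t

namespace IsSturmLiouvilleSolution

theorem const_mul (h : IsSturmLiouvilleSolution p r s y q) (a : 𝕜) :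
    IsSturmLiouvilleSolution p r s (fun t => a * y t) fun t => a * q t where
  hasDerivAt t ht := ((h.hasDerivAt t ht).const_mul a).congr_deriv (by ring)
  hasDerivAt_flux t ht := ((h.hasDerivAt_flux t ht).const_mul a).congr_deriv (by ring)

theorem comp_const_sub (h : IsSturmLiouvilleSolution p r s y q) (a : 𝕜) :
    IsSturmLiouvilleSolution (fun t => p (a - t)) (fun t => r (a - t)) ((a - ·) ⁻¹' s)
      (fun t => y (a - t)) fun t => -q (a - t) where
  hasDerivAt t ht := ((h.hasDerivAt _ ht).comp_const_sub a t).congr_deriv (neg_div _ _).symm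
  hasDerivAt_flux t ht := ((h.hasDerivAt_flux _ ht).comp_const_sub a t).neg.congr_deriv
    (neg_neg _)

theorem wronskian_eq (hu : IsSturmLiouvilleSolution p r s u f)
    (hv : IsSturmLiouvilleSolution p r s v g) (hs : IsOpen s) (hs' : IsPreconnected s)
    {x t : 𝕜} (hx : x ∈ s) (ht : t ∈ s) : wronskian u f v g x = wronskian u f v g t := by
  have hd : ∀ t ∈ s, HasDerivAt (wronskian u f v g) 0 t := fun t ht =>
    (((hu.hasDerivAt t ht).mul (hv.hasDerivAt_flux t ht)).sub
      ((hv.hasDerivAt t ht).mul (hu.hasDerivAt_flux t ht))).congr_deriv (by ring)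
  exact hs.is_const_of_deriv_eq_zero hs'
    (fun t ht => (hd t ht).differentiableAt.differentiableWithinAt)
    (fun t ht => (hd t ht).deriv) hx ht

theorem exists_eqOn_linearCombination (hy : IsSturmLiouvilleSolution p r s y q)
    (hu : IsSturmLiouvilleSolution p r s u f) (hv : IsSturmLiouvilleSolution p r s v g)
    (hs : IsOpen s) (hs' : IsPreconnected s) {x : 𝕜} (hx : x ∈ s)
    (hW : wronskian u f v g x ≠ 0) : ∃ a b : 𝕜, EqOn y (fun t => a * u t + b * v t) s := by
  refine ⟨wronskian y q v g x / wronskian u f v g x, wronskian u f y q x / wronskian u f v g x,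
    fun t ht => ?_⟩
  have hplucker : wronskian u f v g t * y t =
      wronskian y q v g t * u t + wronskian u f y q t * v t := by
    simp only [wronskian]
    ring
  rw [← hu.wronskian_eq hv hs hs' hx ht, ← hy.wronskian_eq hv hs hs' hx ht,
    ← hu.wronskian_eq hy hs hs' hx ht] at hplucker
  field_simp
  linear_combination hplucker

end IsSturmLiouvilleSolution

end SturmLiouville

section Asymptotics

theorem tendsto_log_mul_sub_nhdsGT_zero {f : ℝ → ℝ} (hf : DifferentiableAt ℝ f 0) :
    Tendsto (fun t => log t * (f t - f 0)) (𝓝[>] 0) (𝓝 0) := by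
  have hO : (fun t => f t - f 0) =O[𝓝[>] 0] fun t : ℝ => t := by
    simpa using hf.isBigO_sub.mono nhdsWithin_le_nhds
  refine ((isBigO_refl log _).mul hO).trans_tendsto ?_
  simpa using tendsto_log_mul_rpow_nhdsGT_zero one_pos

theorem eq_and_eq_of_tendsto_linearCombination_sub {X 𝕜 : Type*} [NormedField 𝕜] {l : Filter X}
    [l.NeBot] {f g h : X → 𝕜} {a b c d : 𝕜} (hf : Tendsto f l (𝓝 1))
    (hg : Tendsto (fun x => g x - h x) l (𝓝 0)) (hh : Tendsto h l (Bornology.cobounded 𝕜))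
    (hlim : Tendsto (fun x => a * f x + b * g x - d * h x) l (𝓝 c)) : a = c ∧ b = d := by
  have hmul : Tendsto (fun x => (b - d) * h x) l (𝓝 (c - a)) := by
    have := (hlim.sub (hf.const_mul a)).sub (hg.const_mul b)
    rw [mul_one, mul_zero, sub_zero] at this
    exact this.congr fun x => by ring
  have hbd : b = d := by
    by_contra! hne
    have hconst := hmul.const_mul (b - d)⁻¹
    simp only [inv_mul_cancel_left₀ (sub_ne_zero.2 hne)] at hconst
    exact hh.not_tendsto (Metric.disjoint_cobounded_nhds _) hconst
  simp only [hbd, sub_self, zero_mul, tendsto_const_nhds_iff] at hmul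
  exact ⟨(sub_eq_zero.1 hmul.symm).symm, hbd⟩

end Asymptotics

section Coefficients

/-- The normalized Pochhammer symbol `(1/2)_n / n!`, equal to the Wallis ratio
`(2n - 1)!! / (2n)!!`. -/
noncomputable def wallisRatio (n : ℕ) : ℝ := (ascPochhammer ℝ n).eval (1 / 2) / n.factorial

theorem wallisRatio_zero : wallisRatio 0 = 1 := by simp [wallisRatio]

theorem wallisRatio_succ (n : ℕ) :
    wallisRatio (n + 1) = wallisRatio n * ((2 * n + 1) / (2 * n + 2)) := by
  simp only [wallisRatio, ascPochhammer_succ_eval, Nat.factorial_succ, Nat.cast_mul, Nat.cast_add,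
    Nat.cast_one]
  field_simp
  ring

theorem wallisRatio_eq_prod (n : ℕ) :
    wallisRatio n = ∏ i ∈ Finset.range n, (2 * (i : ℝ) + 1) / (2 * i + 2) := by
  induction n with
  | zero => exact wallisRatio_zero
  | succ n ih => rw [wallisRatio_succ, ih, Finset.prod_range_succ]

theorem wallisRatio_nonneg (n : ℕ) : 0 ≤ wallisRatio n := by
  rw [wallisRatio_eq_prod]
  positivity

theorem wallisRatio_le_one (n : ℕ) : wallisRatio n ≤ 1 := by
  rw [wallisRatio_eq_prod]
  exact Finset.prod_le_one (fun i _ => by positivity)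
    fun i _ => div_le_one_of_le₀ (by linarith) (by positivity)

theorem aCoef_eq_wallisRatio_sq (n : ℕ) : aCoef n = wallisRatio n ^ 2 := rfl

theorem aCoef_zero : aCoef 0 = 1 := by
  rw [aCoef_eq_wallisRatio_sq, wallisRatio_zero, one_pow]

theorem aCoef_succ (n : ℕ) : aCoef (n + 1) = (n + 1 / 2) ^ 2 / (n + 1) ^ 2 * aCoef n := by
  simp only [aCoef_eq_wallisRatio_sq, wallisRatio_succ]
  field_simp

theorem norm_aCoef_le_one (n : ℕ) : ‖aCoef n‖ ≤ 1 := by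
  rw [aCoef_eq_wallisRatio_sq, Real.norm_of_nonneg (sq_nonneg _)]
  exact pow_le_one₀ (wallisRatio_nonneg n) (wallisRatio_le_one n)

theorem hSum_zero : hSum 0 = 0 := by simp [hSum]

theorem hSum_succ (n : ℕ) : hSum (n + 1) = hSum n + 1 / ((n + 1) * (n + 1 / 2)) := by
  rw [hSum, Finset.sum_Icc_succ_top (by lia), ← hSum]
  push_cast
  ring_nf

theorem hSum_nonneg (n : ℕ) : 0 ≤ hSum n := by
  induction n with
  | zero => exact hSum_zero.ge
  | succ n ih => rw [hSum_succ]; positivity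

theorem hSum_le (n : ℕ) : hSum n ≤ 4 - 4 / (n + 1) := by
  induction n with
  | zero => simp [hSum_zero]
  | succ n ih =>
    have hstep : 1 / (((n : ℝ) + 1) * (n + 1 / 2)) ≤ 4 / (n + 1) - 4 / (n + 1 + 1) := by
      rw [div_sub_div _ _ (by positivity) (by positivity),
        div_le_div_iff₀ (by positivity) (by positivity)]
      nlinarith [Nat.cast_nonneg (α := ℝ) n, pow_pos (Nat.cast_add_one_pos (α := ℝ) n) 2]
    rw [hSum_succ]
    push_cast
    linarith

/-- The coefficients `a_n h_n` of the power series part of `phi1`. -/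
noncomputable def bCoef (n : ℕ) : ℝ := aCoef n * hSum n

theorem bCoef_zero : bCoef 0 = 0 := by rw [bCoef, hSum_zero, mul_zero]

theorem norm_bCoef_le (n : ℕ) : ‖bCoef n‖ ≤ 4 := by
  have hh : hSum n ≤ 4 := (hSum_le n).trans (sub_le_self _ (by positivity))
  calc ‖bCoef n‖ = ‖aCoef n‖ * hSum n := by
        rw [bCoef, norm_mul, Real.norm_of_nonneg (hSum_nonneg n)]
    _ ≤ 1 * 4 := by gcongr; exacts [hSum_nonneg n, norm_aCoef_le_one n]
    _ = 4 := one_mul 4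

end Coefficients

section FormalSolutions

variable {t : ℝ}

theorem enorm_lt_radius_aCoef (ht : |t| < 1) : ‖t‖ₑ < (ofScalars ℝ aCoef).radius :=
  enorm_lt_radius_of_norm_le norm_aCoef_le_one ht

theorem enorm_lt_radius_bCoef (ht : |t| < 1) : ‖t‖ₑ < (ofScalars ℝ bCoef).radius :=
  enorm_lt_radius_of_norm_le norm_bCoef_le ht

theorem phi0_eq_ofScalarsSum : phi0 = ofScalarsSum aCoef := by
  simp_rw [ofScalarsSum_eq_tsum, smul_eq_mul]
  rfl

theorem phi1_eq_log_mul_add (t : ℝ) :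
    phi1 t = log t * phi0 t + ofScalarsSum bCoef t := by
  simp_rw [ofScalarsSum_eq_tsum, smul_eq_mul]
  rfl

theorem ofScalarsSum_aCoef_hypergeometric (ht : |t| < 1) :
    ofScalarsSum (eulerCoeff (eulerCoeff aCoef)) t =
      t * (ofScalarsSum (eulerCoeff (eulerCoeff aCoef)) t + ofScalarsSum (eulerCoeff aCoef) t
        + ofScalarsSum aCoef t / 4) := by
  have h := hasSum_hypergeometric (enorm_lt_radius_aCoef ht) (1 / 2) (1 / 2) 1
  have hzero := h.unique (hasSum_zero.congr_fun fun n => by rw [aCoef_succ]; field_simp; ring)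
  linear_combination hzero

theorem ofScalarsSum_bCoef_hypergeometric (ht : |t| < 1) :
    ofScalarsSum (eulerCoeff (eulerCoeff bCoef)) t + 2 * ofScalarsSum (eulerCoeff aCoef) t =
      t * (ofScalarsSum (eulerCoeff (eulerCoeff bCoef)) t + ofScalarsSum (eulerCoeff bCoef) t
        + ofScalarsSum bCoef t / 4)
      + t * (2 * ofScalarsSum (eulerCoeff aCoef) t + ofScalarsSum aCoef t) := by
  have ha := enorm_lt_radius_aCoef ht
  have h := hasSum_hypergeometric (enorm_lt_radius_bCoef ht) (1 / 2) (1 / 2) 1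
  have s0 := hasSum_ofScalarsSum ha
  have s1 := hasSum_ofScalarsSum (ha.trans_le (radius_le_radius_eulerCoeff aCoef))
  have hlog := (((s1.mul_left 2).add s0).mul_left t).sub ((hasSum_eulerCoeff_succ ha).mul_left 2)
  have hval := h.unique (hlog.congr_fun fun n => by
    simp only [eulerCoeff, bCoef, hSum_succ, aCoef_succ]
    push_cast
    field_simp
    ring)
  linear_combination hval

end FormalSolutions

section Hypergeometric

variable {t : ℝ} {y q : ℝ → ℝ}

/-- `y` solves the hypergeometric equation `(t (1 - t) y′)′ = y / 4` of `phi0` on `(0, 1)`, with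
flux `q = t (1 - t) y′`. -/
abbrev IsHypergeometricSolution (y q : ℝ → ℝ) : Prop :=
  IsSturmLiouvilleSolution (fun t => t * (1 - t)) (fun _ => 1 / 4) (Ioo 0 1) y q

theorem IsHypergeometricSolution.comp_one_sub (h : IsHypergeometricSolution y q) :
    IsHypergeometricSolution (fun t => y (1 - t)) fun t => -q (1 - t) := by
  simpa [IsHypergeometricSolution, mul_comm] using h.comp_const_sub 1

/-- The flux `t (1 - t) φ₀′`. -/
noncomputable def phi0Flux (t : ℝ) : ℝ := (1 - t) * ofScalarsSum (eulerCoeff aCoef) t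

/-- The flux `t (1 - t) φ₁′`. -/
noncomputable def phi1Flux (t : ℝ) : ℝ :=
  (1 - t) * (phi0 t + log t * ofScalarsSum (eulerCoeff aCoef) t
    + ofScalarsSum (eulerCoeff bCoef) t)

theorem hasDerivAt_one_sub_mul {f : ℝ → ℝ} {f' : ℝ} (h : HasDerivAt f f' t) :
    HasDerivAt (fun x => (1 - x) * f x) ((1 - t) * f' - f t) t :=
  (((hasDerivAt_id t).const_sub 1).mul h).congr_deriv (by simp; ring)

theorem abs_lt_one_of_mem_Ioo (ht : t ∈ Ioo (0 : ℝ) 1) : |t| < 1 :=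
  abs_lt.2 ⟨by linarith [ht.1], ht.2⟩

theorem isHypergeometricSolution_phi0 : IsHypergeometricSolution phi0 phi0Flux where
  hasDerivAt t ht := by
    have h1 : 1 - t ≠ 0 := (sub_pos.2 ht.2).ne'
    rw [phi0_eq_ofScalarsSum]
    refine (hasDerivAt_ofScalarsSum (enorm_lt_radius_aCoef (abs_lt_one_of_mem_Ioo ht))
      ht.1.ne').congr_deriv ?_
    rw [phi0Flux]
    field_simp
  hasDerivAt_flux t ht := by
    have ht0 := ht.1.ne'
    have habs := abs_lt_one_of_mem_Ioo ht
    have hθ := (enorm_lt_radius_aCoef habs).trans_le (radius_le_radius_eulerCoeff aCoef)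
    refine (hasDerivAt_one_sub_mul (hasDerivAt_ofScalarsSum hθ ht0)).congr_deriv ?_
    rw [phi0_eq_ofScalarsSum]
    field_simp
    linear_combination 4 * ofScalarsSum_aCoef_hypergeometric habs

theorem isHypergeometricSolution_phi1 : IsHypergeometricSolution phi1 phi1Flux where
  hasDerivAt t ht := by
    have ht0 := ht.1.ne'
    have h1 : 1 - t ≠ 0 := (sub_pos.2 ht.2).ne'
    have habs := abs_lt_one_of_mem_Ioo ht
    have hb := hasDerivAt_ofScalarsSum (enorm_lt_radius_bCoef habs) ht0
    have hlog := (Real.hasDerivAt_log ht0).mul (isHypergeometricSolution_phi0.hasDerivAt t ht)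
    rw [funext phi1_eq_log_mul_add]
    refine (hlog.add hb).congr_deriv ?_
    simp only [phi1Flux, phi0Flux]
    field_simp
  hasDerivAt_flux t ht := by
    have ht0 := ht.1.ne'
    have h1 : 1 - t ≠ 0 := (sub_pos.2 ht.2).ne'
    have habs := abs_lt_one_of_mem_Ioo ht
    have hθa := hasDerivAt_ofScalarsSum
      ((enorm_lt_radius_aCoef habs).trans_le (radius_le_radius_eulerCoeff aCoef)) ht0
    have hθb := hasDerivAt_ofScalarsSum
      ((enorm_lt_radius_bCoef habs).trans_le (radius_le_radius_eulerCoeff bCoef)) ht0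
    have hφ := isHypergeometricSolution_phi0.hasDerivAt t ht
    refine (hasDerivAt_one_sub_mul
      ((hφ.add ((Real.hasDerivAt_log ht0).mul hθa)).add hθb)).congr_deriv ?_
    simp only [phi1_eq_log_mul_add, phi0_eq_ofScalarsSum, phi0Flux, Pi.add_apply, Pi.mul_apply]
    field_simp
    linear_combination 4 * log t * ofScalarsSum_aCoef_hypergeometric habs
      + 4 * ofScalarsSum_bCoef_hypergeometric habs

theorem tendsto_phi0_nhdsGT_zero : Tendsto phi0 (𝓝[>] 0) (𝓝 1) := by
  rw [phi0_eq_ofScalarsSum, ← aCoef_zero]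
  exact (tendsto_ofScalarsSum_zero
    (by simpa using enorm_lt_radius_aCoef (t := 0))).mono_left nhdsWithin_le_nhds

theorem tendsto_phi1_sub_log_nhdsGT_zero :
    Tendsto (fun t => phi1 t - log t) (𝓝[>] 0) (𝓝 0) := by
  have hb := (tendsto_ofScalarsSum_zero (c := bCoef)
    (by simpa using enorm_lt_radius_bCoef (t := 0))).mono_left (nhdsWithin_le_nhds (s := Ioi 0))
  have ha := tendsto_log_mul_sub_nhdsGT_zero
    (differentiableAt_ofScalarsSum (enorm_lt_radius_aCoef (t := 0) (by simp)))
  rw [bCoef_zero] at hb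
  refine (zero_add (0 : ℝ) ▸ ha.add hb).congr fun t => ?_
  rw [phi1_eq_log_mul_add, phi0_eq_ofScalarsSum, ofScalarsSum_zero, aCoef_zero]
  simp only [smul_eq_mul]
  ring

theorem tendsto_wronskian_phi0_phi1_nhdsGT_zero :
    Tendsto (wronskian phi0 phi0Flux phi1 phi1Flux) (𝓝[>] 0) (𝓝 1) := by
  have ha : 0 < (ofScalars ℝ aCoef).radius := by simpa using enorm_lt_radius_aCoef (t := 0)
  have hb : 0 < (ofScalars ℝ bCoef).radius := by simpa using enorm_lt_radius_bCoef (t := 0)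
  have hφ := tendsto_ofScalarsSum_zero ha
  have hθa := tendsto_ofScalarsSum_zero (ha.trans_le (radius_le_radius_eulerCoeff aCoef))
  have hB := tendsto_ofScalarsSum_zero hb
  have hθb := tendsto_ofScalarsSum_zero (hb.trans_le (radius_le_radius_eulerCoeff bCoef))
  have hone : Tendsto (fun t : ℝ => 1 - t) (𝓝 0) (𝓝 1) := by
    simpa using (continuous_sub_left (1 : ℝ)).tendsto 0
  have hlim := hone.mul (((hφ.pow 2).add (hφ.mul hθb)).sub (hθa.mul hB))
  simp only [aCoef_zero, bCoef_zero, eulerCoeff, Nat.cast_zero, mul_zero, one_pow,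
    add_zero, sub_zero, mul_one] at hlim
  refine (hlim.mono_left nhdsWithin_le_nhds).congr fun t => ?_
  simp only [wronskian, phi0Flux, phi1Flux, phi1_eq_log_mul_add, phi0_eq_ofScalarsSum]
  ring

theorem exists_wronskian_phi0_phi1_ne_zero :
    ∃ x ∈ Ioo (0 : ℝ) 1, wronskian phi0 phi0Flux phi1 phi1Flux x ≠ 0 :=
  let ⟨x, hW, hx⟩ := ((tendsto_wronskian_phi0_phi1_nhdsGT_zero.eventually_ne one_ne_zero).and
    (Ioo_mem_nhdsGT one_pos)).exists
  ⟨x, hx, hW⟩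

theorem IsHypergeometricSolution.exists_eqOn_phi0_phi1 (hy : IsHypergeometricSolution y q) :
    ∃ a b : ℝ, EqOn y (fun t => a * phi0 t + b * phi1 t) (Ioo 0 1) :=
  let ⟨_, hx, hW⟩ := exists_wronskian_phi0_phi1_ne_zero
  hy.exists_eqOn_linearCombination isHypergeometricSolution_phi0 isHypergeometricSolution_phi1
    isOpen_Ioo isPreconnected_Ioo hx hW

end Hypergeometric

section EllipticIntegral

variable {k : ℝ}

theorem hasSum_ascPochhammer_div_factorial_mul_pow (a : ℝ) {x : ℝ} (hx : |x| < 1) :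
    HasSum (fun n : ℕ => (ascPochhammer ℝ n).eval a / n.factorial * x ^ n)
      (1 / (1 - x) ^ a) := by
  have h := (Real.one_div_one_sub_rpow_hasFPowerSeriesOnBall_zero a).hasSum (y := x)
    (by simpa [enorm_eq_nnnorm, ← NNReal.coe_lt_coe] using hx)
  rw [zero_add] at h
  refine h.congr_fun fun n => ?_
  have hc := Ring.factorial_nsmul_multichoose_eq_ascPochhammer a n
  rw [Ring.multichoose_eq, nsmul_eq_mul, Polynomial.ascPochhammer_smeval_eq_eval] at hc
  rw [ofScalars_apply_eq, smul_eq_mul, ← hc]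
  field_simp

theorem hasSum_wallisRatio_mul_pow {x : ℝ} (hx : |x| < 1) :
    HasSum (fun n => wallisRatio n * x ^ n) (1 / √(1 - x)) := by
  rw [Real.sqrt_eq_rpow]
  exact hasSum_ascPochhammer_div_factorial_mul_pow _ hx

theorem integral_cos_pow_two_mul (n : ℕ) :
    ∫ θ in 0..π / 2, cos θ ^ (2 * n) = π / 2 * wallisRatio n := by
  rw [EulerSine.integral_cos_pow_eq, integral_sin_pow_even, wallisRatio_eq_prod]
  ring

/-- The complete elliptic integral of the first kind `K(k)`, with the sine of the usual definition
replaced by the cosine. -/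
noncomputable def ellipticK (k : ℝ) : ℝ := ∫ θ in 0..π / 2, 1 / √(1 - (k * cos θ) ^ 2)

theorem pi_mul_phi0_sq (hk : |k| < 1) : π * phi0 (k ^ 2) = 2 * ellipticK k := by
  have hk2 : k ^ 2 < 1 := (sq_lt_one_iff_abs_lt_one k).2 hk
  have hle (θ : ℝ) : (k * cos θ) ^ 2 ≤ k ^ 2 := by
    rw [mul_pow]
    exact mul_le_of_le_one_right (sq_nonneg k) (Real.cos_sq_le_one θ)
  have hsum : HasSum (fun n => ∫ θ in 0..π / 2, wallisRatio n * ((k * cos θ) ^ 2) ^ n)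
      (ellipticK k) := by
    refine intervalIntegral.hasSum_integral_of_dominated_convergence (fun n _ => (k ^ 2) ^ n)
      (fun n => Continuous.aestronglyMeasurable (by fun_prop)) (fun n => .of_forall fun θ _ => ?_)
      (.of_forall fun _ _ => summable_geometric_of_lt_one (sq_nonneg k) hk2)
      intervalIntegrable_const (.of_forall fun θ _ => hasSum_wallisRatio_mul_pow ?_)
    · rw [norm_mul, Real.norm_of_nonneg (wallisRatio_nonneg n), Real.norm_of_nonneg (by positivity)]
      exact (mul_le_of_le_one_left (by positivity) (wallisRatio_le_one n)).trans
        (pow_le_pow_left₀ (sq_nonneg _) (hle θ) n)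
    · rw [abs_of_nonneg (sq_nonneg _)]
      exact (hle θ).trans_lt hk2
  have hterm (n : ℕ) : ∫ θ in 0..π / 2, wallisRatio n * ((k * cos θ) ^ 2) ^ n =
      π / 2 * (aCoef n * (k ^ 2) ^ n) := by
    simp_rw [mul_pow, ← pow_mul, ← mul_assoc]
    rw [intervalIntegral.integral_const_mul, integral_cos_pow_two_mul, aCoef_eq_wallisRatio_sq]
    ring
  simp_rw [← hsum.tsum_eq, hterm, tsum_mul_left, phi0]
  ring

theorem abs_mul_cos_lt_one (hk : |k| < 1) (θ : ℝ) : |k * cos θ| < 1 := by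
  rw [abs_mul]
  exact (mul_le_of_le_one_right (abs_nonneg k) (Real.abs_cos_le_one θ)).trans_lt hk

theorem sqrt_one_sub_sq_pos {x : ℝ} (hx : |x| < 1) : 0 < √(1 - x ^ 2) :=
  Real.sqrt_pos.2 (sub_pos.2 ((sq_lt_one_iff_abs_lt_one x).2 hx))

theorem continuous_mul_cos_div_sqrt (hk : |k| < 1) :
    Continuous fun θ => k * cos θ / √(1 - (k * cos θ) ^ 2) :=
  Continuous.div (by fun_prop) (by fun_prop)
    fun θ => (sqrt_one_sub_sq_pos (abs_mul_cos_lt_one hk θ)).ne'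

theorem one_div_sqrt_one_sub_sq {x : ℝ} (hx : |x| < 1) :
    1 / √(1 - x ^ 2) = x / √(1 - x ^ 2) + √((1 - x) / (1 + x)) := by
  have h1 : 0 < 1 - x := sub_pos.2 (abs_lt.1 hx).2
  have h2 : 0 < 1 + x := by linarith [(abs_lt.1 hx).1]
  have hfactor : √(1 - x ^ 2) = √(1 - x) * √(1 + x) := by
    rw [← Real.sqrt_mul h1.le]
    congr 1
    ring
  rw [hfactor, Real.sqrt_div h1.le]
  field_simp
  rw [Real.sq_sqrt h1.le]
  ring

theorem arsinh_div_sqrt_one_sub_sq (hk : |k| < 1) :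
    arsinh (k / √(1 - k ^ 2)) = artanh k := by
  rw [← Real.sinh_artanh (abs_lt.1 hk), Real.arsinh_sinh]

theorem integral_mul_cos_div_sqrt (hk : |k| < 1) :
    ∫ θ in 0..π / 2, k * cos θ / √(1 - (k * cos θ) ^ 2) = artanh k := by
  have hk0 := sqrt_one_sub_sq_pos hk
  have hderiv (θ : ℝ) : HasDerivAt (fun θ => arsinh (k / √(1 - k ^ 2) * sin θ))
      (k * cos θ / √(1 - (k * cos θ) ^ 2)) θ := by
    refine ((Real.hasDerivAt_sin θ).const_mul _).arsinh.congr_deriv ?_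
    have hsqrt : √(1 + (k / √(1 - k ^ 2) * sin θ) ^ 2) =
        √(1 - (k * cos θ) ^ 2) / √(1 - k ^ 2) := by
      rw [← Real.sqrt_div' _ (Real.sqrt_pos.1 hk0).le]
      congr 1
      rw [mul_pow, div_pow, Real.sq_sqrt (Real.sqrt_pos.1 hk0).le, mul_pow, Real.cos_sq']
      have := (Real.sqrt_pos.1 hk0).ne'
      field_simp
      ring
    rw [hsqrt, smul_eq_mul]
    field_simp
  rw [intervalIntegral.integral_eq_sub_of_hasDerivAt (fun θ _ => hderiv θ)
    ((continuous_mul_cos_div_sqrt hk).intervalIntegrable _ _)]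
  simp [arsinh_div_sqrt_one_sub_sq hk]

/-- The part of `ellipticK` that stays bounded as `k → 1`. -/
noncomputable def ellipticRegular (k : ℝ) : ℝ :=
  ∫ θ in 0..π / 2, √((1 - k * cos θ) / (1 + k * cos θ))

theorem ellipticK_eq_artanh_add (hk : |k| < 1) :
    ellipticK k = artanh k + ellipticRegular k := by
  have hreg : Continuous fun θ => √((1 - k * cos θ) / (1 + k * cos θ)) :=
    (Continuous.div (by fun_prop) (by fun_prop) fun θ => by
      linarith [(abs_lt.1 (abs_mul_cos_lt_one hk θ)).1]).sqrt
  simp_rw [ellipticK, one_div_sqrt_one_sub_sq (abs_mul_cos_lt_one hk _)]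
  rw [intervalIntegral.integral_add ((continuous_mul_cos_div_sqrt hk).intervalIntegrable _ _)
    (hreg.intervalIntegrable _ _), integral_mul_cos_div_sqrt hk, ellipticRegular]

theorem cos_nonneg_of_mem_uIcc {θ : ℝ} (hθ : θ ∈ uIcc 0 (π / 2)) : 0 ≤ cos θ := by
  rw [uIcc_of_le Real.pi_div_two_pos.le] at hθ
  exact Real.cos_nonneg_of_mem_Icc ⟨by linarith [hθ.1, Real.pi_pos], hθ.2⟩

theorem sqrt_one_sub_cos_div_one_add_cos (θ : ℝ) :
    √((1 - cos θ) / (1 + cos θ)) = |sin θ| / (1 + cos θ) := by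
  have hpos : 0 ≤ 1 + cos θ := by linarith [Real.neg_one_le_cos θ]
  have hsq : (1 - cos θ) / (1 + cos θ) = (sin θ / (1 + cos θ)) ^ 2 := by
    rcases hpos.eq_or_lt with h0 | h0
    · simp [← h0]
    · rw [div_pow, Real.sin_sq]
      field_simp
      ring
  rw [hsq, Real.sqrt_sq_eq_abs, abs_div, abs_of_nonneg hpos]

theorem ellipticRegular_one : ellipticRegular 1 = log 2 := by
  have hsqrt : EqOn (fun θ => √((1 - 1 * cos θ) / (1 + 1 * cos θ)))
      (fun θ => sin θ / (1 + cos θ)) (uIcc 0 (π / 2)) := fun θ hθ => by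
    rw [uIcc_of_le Real.pi_div_two_pos.le] at hθ
    have hsin := Real.sin_nonneg_of_mem_Icc ⟨hθ.1, by linarith [hθ.2, Real.pi_pos]⟩
    simp only [one_mul, sqrt_one_sub_cos_div_one_add_cos, abs_of_nonneg hsin]
  have hpos {θ : ℝ} (hθ : θ ∈ uIcc 0 (π / 2)) : 1 + cos θ ≠ 0 := by
    linarith [cos_nonneg_of_mem_uIcc hθ]
  have hderiv (θ : ℝ) (hθ : θ ∈ uIcc 0 (π / 2)) :
      HasDerivAt (fun θ => -log (1 + cos θ)) (sin θ / (1 + cos θ)) θ :=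
    (((Real.hasDerivAt_cos θ).const_add 1).log (hpos hθ)).neg.congr_deriv (by ring)
  have hcont : ContinuousOn (fun θ => sin θ / (1 + cos θ)) (uIcc 0 (π / 2)) :=
    ContinuousOn.div (by fun_prop) (by fun_prop) fun θ hθ => hpos hθ
  rw [ellipticRegular, intervalIntegral.integral_congr hsqrt,
    intervalIntegral.integral_eq_sub_of_hasDerivAt hderiv hcont.intervalIntegrable]
  norm_num

theorem continuousOn_ellipticRegular : ContinuousOn ellipticRegular (Ici 0) := by
  intro k₀ (hk₀ : 0 ≤ k₀)
  have hcos {θ : ℝ} (hθ : θ ∈ uIoc 0 (π / 2)) : 0 ≤ cos θ :=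
    cos_nonneg_of_mem_uIcc (uIoc_subset_uIcc hθ)
  refine intervalIntegral.continuousWithinAt_of_dominated_interval (bound := fun _ => 1)
    (.of_forall fun k => Measurable.aestronglyMeasurable (by fun_prop)) ?_
    intervalIntegrable_const (.of_forall fun θ hθ => ?_)
  · filter_upwards [self_mem_nhdsWithin] with k hk
    refine .of_forall fun θ hθ => ?_
    have hkc := mul_nonneg hk (hcos hθ)
    rw [Real.norm_of_nonneg (Real.sqrt_nonneg _), Real.sqrt_le_one]
    exact div_le_one_of_le₀ (by linarith) (by positivity)
  · have hkc := mul_nonneg hk₀ (hcos hθ)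
    refine (ContinuousAt.sqrt (ContinuousAt.div (by fun_prop) (by fun_prop) ?_)).continuousWithinAt
    positivity

theorem artanh_sqrt_one_sub {t : ℝ} (ht : t ∈ Ioo (0 : ℝ) 1) :
    artanh √(1 - t) = log (1 + √(1 - t)) - log t / 2 := by
  have hk1 : √(1 - t) < 1 := (Real.sqrt_lt' one_pos).2 (by linarith [ht.1])
  have hk0 := Real.sqrt_nonneg (1 - t)
  have hquot : (1 + √(1 - t)) / (1 - √(1 - t)) = (1 + √(1 - t)) ^ 2 / t := by
    rw [div_eq_div_iff (by linarith) ht.1.ne']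
    linear_combination (1 + √(1 - t)) * Real.sq_sqrt (sub_nonneg.2 ht.2.le)
  rw [Real.artanh_eq_half_log ⟨by linarith, hk1.le⟩, hquot, Real.log_div (by positivity) ht.1.ne',
    Real.log_pow]
  push_cast
  ring

theorem pi_mul_phi0_one_sub {t : ℝ} (ht : t ∈ Ioo (0 : ℝ) 1) :
    π * phi0 (1 - t) =
      2 * log (1 + √(1 - t)) + 2 * ellipticRegular √(1 - t) - log t := by
  have hk : |√(1 - t)| < 1 := by
    rw [abs_of_nonneg (Real.sqrt_nonneg _), Real.sqrt_lt' one_pos]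
    linarith [ht.1]
  have hφ := pi_mul_phi0_sq hk
  rw [Real.sq_sqrt (sub_nonneg.2 ht.2.le), ellipticK_eq_artanh_add hk, artanh_sqrt_one_sub ht] at hφ
  linear_combination hφ

theorem tendsto_pi_mul_phi0_one_sub_add_log :
    Tendsto (fun t => π * phi0 (1 - t) + log t) (𝓝[>] 0) (𝓝 (4 * log 2)) := by
  have hk : Tendsto (fun t : ℝ => √(1 - t)) (𝓝[>] 0) (𝓝 1) := by
    have hcont : Continuous fun t : ℝ => √(1 - t) := by fun_prop
    simpa using (hcont.tendsto 0).mono_left nhdsWithin_le_nhds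
  have hreg : Tendsto (fun t : ℝ => ellipticRegular √(1 - t)) (𝓝[>] 0) (𝓝 (log 2)) := by
    rw [← ellipticRegular_one]
    exact (continuousOn_ellipticRegular 1 (mem_Ici.2 zero_le_one)).tendsto.comp
      (tendsto_nhdsWithin_iff.2 ⟨hk, .of_forall fun t => Real.sqrt_nonneg _⟩)
  have hlim := (((hk.const_add 1).log (by norm_num)).const_mul 2).add (hreg.const_mul 2)
  rw [one_add_one_eq_two, ← add_mul, show (2 : ℝ) + 2 = 4 by norm_num] at hlim
  refine hlim.congr' ?_
  filter_upwards [Ioo_mem_nhdsGT one_pos] with t ht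
  rw [pi_mul_phi0_one_sub ht, sub_add_cancel]

end EllipticIntegral

/-- connection formula at `t = 1`:
`π·φ₀(1-t) = 4·log(2)·φ₀(t) - φ₁(t)` for `0 < t < 1`. -/
theorem stmt_13 (t : ℝ) (ht0 : 0 < t) (ht1 : t < 1) :
    Real.pi * phi0 (1 - t) = 4 * Real.log 2 * phi0 t - phi1 t := by
  obtain ⟨a, b, hab⟩ :=
    IsHypergeometricSolution.exists_eqOn_phi0_phi1
      (isHypergeometricSolution_phi0.comp_one_sub.const_mul Real.pi)
  have hlim : Tendsto (fun t => a * phi0 t + b * phi1 t - -1 * log t) (𝓝[>] 0)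
      (𝓝 (4 * log 2)) := by
    refine tendsto_pi_mul_phi0_one_sub_add_log.congr' ?_
    filter_upwards [Ioo_mem_nhdsGT one_pos] with s hs
    linear_combination hab hs
  have hcobounded : Tendsto log (𝓝[>] 0) (Bornology.cobounded ℝ) :=
    Real.tendsto_log_nhdsGT_zero.mono_right IsOrderBornology.atBot_le_cobounded
  obtain ⟨rfl, rfl⟩ := eq_and_eq_of_tendsto_linearCombination_sub tendsto_phi0_nhdsGT_zero
    tendsto_phi1_sub_log_nhdsGT_zero hcobounded hlim
  linear_combination hab ⟨ht0, ht1⟩
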